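/- Let μ > 1/2, 3/2 ≤ ν < μ+1 and 0 < β < 1. Then for all x > 0, ∫_0^x e^{−βu} u^ν t̃_{μ,ν}(u) du > (1/(1−β)) · ( (1 − 4ν²/((2ν−1)(1−β)x)) · e^{−βx} x^ν t̃_{μ,ν}(x) − B_{μ,ν,β}(x) ). -/

import Mathlib

/-!
Write `y = t̃_{μ,ν}`, `z = t̃_{μ+1,ν+1}` and `a(x) = (x/2)^μ / (Γ((μ-ν+1)/2) Γ((μ+ν+3)/2))`.
Termwise differentiation of the series gives the first-order system
`y' = z + ν y / x + a` and `z' = y - (ν+1) z / x`.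
Two inequalities on `(0, ∞)` follow from the integrating factor `e^x` (`pos_of_deriv_add_pos`):

* `D = y - z > 0` (`lommel_succ_lt`), since `D' + D = (ν y + (ν+1) z) / x + a > 0`;
* `H = z - y + (ν + 1/2) y / x + a > 0` (`lommel_growth`), since
  `H' + H = D / (2x) + (ν + 1/2)(ν - 1) y / x² + (ν + 1/2 + μ) a / x > 0`.

By a substitution, `B(x) = ∫₀ˣ e^{-βu} u^ν a(u) du` (`Bconst_eq`). With
`C = 4ν² / ((2ν-1)(1-β))`, multiplying the claim by `1 - β` turns it into
`Ψ(x) < ∫₀ˣ e^{-βu} u^ν ((1-β) y + a) du`, where `Ψ(x) = e^{-βx} x^ν (y - C y / x)` tends to `0`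
at `0`. Differentiating `Ψ` with the system above, the integrand minus `Ψ'` equals
`e^{-βu} u^ν (D + (C(1-β) - 2ν) y/u + (C/u) H + (C/u)(ν - 3/2) y/u)`,
in which every term is nonnegative because `C(1-β) = 4ν²/(2ν-1) ≥ 2ν` and `ν ≥ 3/2`, and `D > 0`
gives strictness.
-/

open Real MeasureTheory

/-- Normalised modified Lommel function of the first kind. -/
noncomputable def lommel (μ ν x : ℝ) : ℝ :=
  ∑' k : ℕ, (x / 2) ^ (μ + 2 * (k : ℝ) + 1) /
    (Real.Gamma ((k : ℝ) + (μ - ν + 3) / 2) * Real.Gamma ((k : ℝ) + (μ + ν + 3) / 2))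

/-- Lower incomplete gamma function. -/
noncomputable def lowerGamma (a x : ℝ) : ℝ :=
  ∫ u in (0:ℝ)..x, Real.exp (-u) * u ^ (a - 1)

noncomputable def Bconst (μ ν β x : ℝ) : ℝ :=
  β ^ (-μ - ν - 1) * lowerGamma (μ + ν + 1) (β * x) /
    (2 ^ μ * Real.Gamma ((μ - ν + 1) / 2) * Real.Gamma ((μ + ν + 3) / 2))

open Set

/-! ### The series with general parameters -/

/-- The series `∑ (x/2)^(m+2k) / (Γ(k+A) Γ(k+B))`. -/
noncomputable def lommelSeries (m A B x : ℝ) : ℝ :=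
  ∑' k : ℕ, (x / 2) ^ (m + 2 * (k : ℝ)) / (Real.Gamma ((k : ℝ) + A) * Real.Gamma ((k : ℝ) + B))

lemma gammaProd_pos {A B : ℝ} (hA : 0 < A) (hB : 0 < B) (k : ℕ) :
    0 < Real.Gamma ((k : ℝ) + A) * Real.Gamma ((k : ℝ) + B) :=
  mul_pos (Real.Gamma_pos_of_pos (by positivity)) (Real.Gamma_pos_of_pos (by positivity))

/-- The weight `k + 1` makes this dominate both the series and its termwise derivative. -/
lemma summable_weighted {A B W : ℝ} (hA : 0 < A) (hB : 0 < B) (hW : 0 ≤ W) :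
    Summable fun k : ℕ => ((k : ℝ) + 1) * W ^ k /
      (Real.Gamma ((k : ℝ) + A) * Real.Gamma ((k : ℝ) + B)) := by
  apply summable_of_ratio_norm_eventually_le (r := 1 / 2) (by norm_num)
  filter_upwards [Filter.eventually_ge_atTop (⌈4 * W⌉₊ + 1)] with k hk
  have hk1 : (1 : ℝ) ≤ k := by exact_mod_cast (by omega : 1 ≤ k)
  have hkW : 4 * W ≤ k := (Nat.le_ceil _).trans (by exact_mod_cast (by omega : ⌈4 * W⌉₊ ≤ k))
  have hG := gammaProd_pos hA hB k
  have e1 : ((k + 1 : ℕ) : ℝ) + A = ((k : ℝ) + A) + 1 := by push_cast; ring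
  have e2 : ((k + 1 : ℕ) : ℝ) + B = ((k : ℝ) + B) + 1 := by push_cast; ring
  have hkA : 0 < (k : ℝ) + A := by positivity
  have hkB : 0 < (k : ℝ) + B := by positivity
  rw [e1, e2, Real.Gamma_add_one hkA.ne', Real.Gamma_add_one hkB.ne']
  have h2 : ((k : ℝ) + A) * Real.Gamma (k + A) * ((k + B) * Real.Gamma (k + B)) =
      ((k + A) * (k + B)) * (Real.Gamma (k + A) * Real.Gamma (k + B)) := by ring
  rw [h2]
  generalize Real.Gamma (k + A) * Real.Gamma (k + B) = G at hG ⊢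
  have hkk : (k : ℝ) ≤ (k + A) * (k + B) := by nlinarith
  rw [Real.norm_of_nonneg (by positivity), Real.norm_of_nonneg (by positivity)]
  rw [← mul_div_assoc, div_le_div_iff₀ (by positivity) hG]
  have hWk : 0 ≤ W ^ k := by positivity
  have key : (((k + 1 : ℕ) : ℝ) + 1) * W ≤ 1 / 2 * ((k : ℝ) + 1) * ((k + A) * (k + B)) := by
    push_cast
    nlinarith
  calc (((k + 1 : ℕ) : ℝ) + 1) * W ^ (k + 1) * G
      = ((((k + 1 : ℕ) : ℝ) + 1) * W) * (W ^ k * G) := by ring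
    _ ≤ (1 / 2 * ((k : ℝ) + 1) * ((k + A) * (k + B))) * (W ^ k * G) := by gcongr
    _ = _ := by ring

lemma rpow_split {w m : ℝ} (hw : 0 < w) (k : ℕ) : w ^ (m + 2 * (k : ℝ)) = w ^ m * (w ^ 2) ^ k := by
  rw [Real.rpow_add hw, ← pow_mul, ← Real.rpow_natCast]
  push_cast
  rfl

lemma summable_lommelSeries {m A B x : ℝ} (hA : 0 < A) (hB : 0 < B) (hx : 0 < x) :
    Summable fun k : ℕ => (x / 2) ^ (m + 2 * (k : ℝ)) /
      (Real.Gamma ((k : ℝ) + A) * Real.Gamma ((k : ℝ) + B)) := by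
  have hx2 : 0 < x / 2 := by positivity
  refine Summable.of_nonneg_of_le (fun k => ?_) (fun k => ?_)
    ((summable_weighted hA hB (sq_nonneg (x / 2))).mul_left ((x / 2) ^ m))
  · have := gammaProd_pos hA hB k
    positivity
  · have hG := gammaProd_pos hA hB k
    rw [rpow_split hx2, ← mul_div_assoc]
    have : (0 : ℝ) ≤ k := by positivity
    gcongr
    exact le_mul_of_one_le_left (by positivity) (by linarith)

lemma lommelSeries_pos {m A B x : ℝ} (hA : 0 < A) (hB : 0 < B) (hx : 0 < x) :
    0 < lommelSeries m A B x :=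
  (summable_lommelSeries hA hB hx).tsum_pos
    (fun k => by have := gammaProd_pos hA hB k; positivity) 0
    (by have := gammaProd_pos hA hB 0; positivity)

lemma lommelSeries_zero {m A B : ℝ} (hm : 0 < m) : lommelSeries m A B 0 = 0 := by
  unfold lommelSeries
  refine (tsum_congr fun k => ?_).trans tsum_zero
  rw [zero_div, Real.zero_rpow (by positivity), zero_div]

lemma continuousOn_lommelSeries {m A B R : ℝ} (hm : 0 < m) (hA : 0 < A) (hB : 0 < B)
    (hR : 0 < R) : ContinuousOn (lommelSeries m A B) (Icc 0 R) := by
  unfold lommelSeries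
  refine continuousOn_tsum (fun k => ?_) (summable_lommelSeries (m := m) hA hB hR) ?_
  · refine ContinuousOn.div_const (ContinuousOn.rpow_const (by fun_prop) ?_) _
    intro x _
    right; positivity
  · intro k x hx
    have hG := gammaProd_pos hA hB k
    have : 0 ≤ x / 2 := by linarith [hx.1]
    rw [Real.norm_of_nonneg (by positivity)]
    gcongr
    exact hx.2

lemma lommelSeries_comm (m A B x : ℝ) : lommelSeries m A B x = lommelSeries m B A x :=
  tsum_congr fun k => by rw [mul_comm (Real.Gamma _)]

/-- Splitting off the `k = 0` term. -/
lemma lommelSeries_eq_add {m A B x : ℝ} (hA : 0 < A) (hB : 0 < B) (hx : 0 < x) :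
    lommelSeries m A B x = (x / 2) ^ m / (Real.Gamma A * Real.Gamma B) +
      lommelSeries (m + 2) (A + 1) (B + 1) x := by
  unfold lommelSeries
  rw [(summable_lommelSeries hA hB hx).tsum_eq_zero_add]
  congr 1
  · simp
  · refine tsum_congr fun k => ?_
    push_cast
    congr 2
    · ring
    · ring_nf
    · ring_nf

lemma lommelSeries_add_one {m A B x : ℝ} (hx : 0 < x) :
    lommelSeries (m + 1) A B x = x / 2 * lommelSeries m A B x := by
  unfold lommelSeries
  rw [← tsum_mul_left]
  refine tsum_congr fun k => ?_
  rw [add_right_comm, Real.rpow_add_one (by positivity)]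
  ring

/-- Termwise differentiation, after writing `m + 2k = 2(k + A - 1) + (m - 2(A - 1))` so that the
recurrence of `Γ` absorbs the factor `k + A - 1`. -/
lemma hasDerivAt_lommelSeries {m A B x : ℝ} (hm : 1 ≤ m) (hA : 1 < A) (hB : 0 < B) (hx : 0 < x) :
    HasDerivAt (lommelSeries m A B)
      (lommelSeries (m - 1) (A - 1) B x + (m - 2 * (A - 1)) / x * lommelSeries m A B x) x := by
  have hA0 : 0 < A := by linarith
  set R := x + 1 with hR
  have hR0 : 0 < R / 2 := by positivity
  have hder : ∀ (k : ℕ) (w : ℝ), w ∈ Ioo 0 R → HasDerivAt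
      (fun w : ℝ => (w / 2) ^ (m + 2 * (k : ℝ)) /
        (Real.Gamma ((k : ℝ) + A) * Real.Gamma ((k : ℝ) + B)))
      (1 / 2 * (m + 2 * (k : ℝ)) * (w / 2) ^ (m + 2 * (k : ℝ) - 1) /
        (Real.Gamma ((k : ℝ) + A) * Real.Gamma ((k : ℝ) + B))) w := by
    intro k w hw
    exact (((hasDerivAt_id w).div_const 2).rpow_const
      (Or.inl (by have := hw.1; simp only [id]; positivity))).div_const _
  have main := hasDerivAt_tsum_of_isPreconnected
    ((summable_weighted hA0 hB (sq_nonneg (R / 2))).mul_left ((m + 2) * (R / 2) ^ (m - 1)))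
    isOpen_Ioo isPreconnected_Ioo hder (fun k w hw => ?_)
    (show x ∈ Ioo 0 R from ⟨hx, by linarith⟩) (summable_lommelSeries hA0 hB hx)
    (show x ∈ Ioo 0 R from ⟨hx, by linarith⟩)
  · refine main.congr_deriv (Eq.symm ?_)
    unfold lommelSeries
    rw [← tsum_mul_left, ← Summable.tsum_add (summable_lommelSeries (by linarith) hB hx)
      ((summable_lommelSeries hA0 hB hx).mul_left _)]
    refine tsum_congr fun k => ?_
    have hk : 0 < (k : ℝ) + (A - 1) := by
      have : (0 : ℝ) ≤ k := by positivity
      linarith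
    have e : (k : ℝ) + A = (k + (A - 1)) + 1 := by ring
    have hG1 := Real.Gamma_pos_of_pos hk
    have hG2 : 0 < Real.Gamma ((k : ℝ) + B) := Real.Gamma_pos_of_pos (by positivity)
    have e2 : m + 2 * (k : ℝ) = (m - 1 + 2 * k) + 1 := by ring
    have e3 : (m - 1 + 2 * (k : ℝ)) + 1 - 1 = m - 1 + 2 * k := by ring
    rw [e, Real.Gamma_add_one hk.ne', e2, e3, Real.rpow_add_one (by positivity)]
    generalize Real.Gamma (k + (A - 1)) = G1 at *
    generalize Real.Gamma (k + B) = G2 at *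
    generalize (x / 2) ^ (m - 1 + 2 * (k : ℝ)) = P at *
    field_simp
    ring
  · have hG := gammaProd_pos hA0 hB k
    have hw0 := hw.1
    have hk : (0 : ℝ) ≤ k := by positivity
    have hexp : 0 ≤ m + 2 * (k : ℝ) - 1 := by linarith
    rw [Real.norm_of_nonneg (by positivity)]
    have h1 : (w / 2) ^ (m + 2 * (k : ℝ) - 1) ≤ (R / 2) ^ (m - 1) * ((R / 2) ^ 2) ^ k := by
      rw [← rpow_split hR0, show m - 1 + 2 * (k : ℝ) = m + 2 * k - 1 by ring]
      exact Real.rpow_le_rpow (by positivity) (by linarith [hw.2]) hexp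
    have h2 : 1 / 2 * (m + 2 * (k : ℝ)) ≤ (m + 2) * (k + 1) := by nlinarith
    calc _ ≤ ((m + 2) * (k + 1)) * ((R / 2) ^ (m - 1) * ((R / 2) ^ 2) ^ k) /
          (Real.Gamma ((k : ℝ) + A) * Real.Gamma ((k : ℝ) + B)) := by gcongr
      _ = _ := by ring

/-! ### A positivity criterion -/

/-- Integrating factor `e^x`: if `f 0 = 0` and `f' + f > 0` on `(0, ∞)`, then `f > 0` there. -/
lemma pos_of_deriv_add_pos {f f' : ℝ → ℝ} (hc : ∀ R > 0, ContinuousOn f (Icc 0 R)) (h0 : f 0 = 0)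
    (hd : ∀ x > 0, HasDerivAt f (f' x) x) (hpos : ∀ x > 0, 0 < f' x + f x) :
    ∀ x > 0, 0 < f x := by
  intro x hx
  have hg : ∀ w > 0, HasDerivAt (fun w => Real.exp w * f w)
      (Real.exp w * f w + Real.exp w * f' w) w := fun w hw => (Real.hasDerivAt_exp w).mul (hd w hw)
  have hmono : StrictMonoOn (fun w => Real.exp w * f w) (Icc 0 x) := by
    refine strictMonoOn_of_deriv_pos (convex_Icc 0 x)
      (Real.continuous_exp.continuousOn.mul (hc x hx)) fun w hw => ?_
    rw [interior_Icc] at hw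
    rw [(hg w hw.1).deriv]
    nlinarith [Real.exp_pos w, hpos w hw.1, mul_pos (Real.exp_pos w) (hpos w hw.1)]
  have := hmono (left_mem_Icc.2 hx.le) (right_mem_Icc.2 hx.le) hx
  simp only [h0, mul_zero] at this
  exact (mul_pos_iff_of_pos_left (Real.exp_pos x)).1 this

/-! ### The first-order system for the Lommel functions -/

/-- The function `(x/2)^μ / (Γ((μ-ν+1)/2) Γ((μ+ν+3)/2))`: the leading term of `t̃_{μ-1,ν+1}`, by which
that function exceeds `t̃_{μ+1,ν+1}`. -/
noncomputable def lommelLead (μ ν x : ℝ) : ℝ :=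
  (x / 2) ^ μ / (Real.Gamma ((μ - ν + 1) / 2) * Real.Gamma ((μ + ν + 3) / 2))

lemma lommel_eq (μ ν : ℝ) :
    lommel μ ν = lommelSeries (μ + 1) ((μ - ν + 3) / 2) ((μ + ν + 3) / 2) := by
  funext x
  refine tsum_congr fun k => ?_
  rw [add_right_comm]

lemma lommel_pos {μ ν x : ℝ} (hν : 0 ≤ ν) (h : ν < μ + 1) (hx : 0 < x) : 0 < lommel μ ν x := by
  rw [lommel_eq]
  exact lommelSeries_pos (by linarith) (by linarith) hx

lemma lommel_zero {μ ν : ℝ} (hμ : 0 < μ) : lommel μ ν 0 = 0 := by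
  rw [lommel_eq]
  exact lommelSeries_zero (by linarith)

lemma continuousOn_lommel {μ ν R : ℝ} (hμ : 0 < μ) (hν : 0 ≤ ν) (h : ν < μ + 1) (hR : 0 < R) :
    ContinuousOn (lommel μ ν) (Icc 0 R) := by
  rw [lommel_eq]
  exact continuousOn_lommelSeries (by linarith) (by linarith) (by linarith) hR

lemma continuousOn_lommel_div {μ ν R : ℝ} (hμ : 0 < μ) (hν : 0 ≤ ν) (h : ν < μ + 1) (hR : 0 < R) :
    ContinuousOn (fun x => lommel μ ν x / x) (Icc 0 R) := by
  have hc := continuousOn_lommelSeries (m := μ) (A := (μ - ν + 3) / 2) (B := (μ + ν + 3) / 2)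
    hμ (by linarith) (by linarith) hR
  refine (hc.div_const 2).congr fun x hx => ?_
  rcases hx.1.eq_or_lt with rfl | hx0
  · simp [lommelSeries_zero hμ]
  · rw [lommel_eq]
    simp only [lommelSeries_add_one hx0]
    field_simp

lemma continuous_lommelLead {μ : ℝ} (ν : ℝ) (hμ : 0 ≤ μ) : Continuous (lommelLead μ ν) :=
  ((continuous_id.div_const 2).rpow_const fun _ => Or.inr hμ).div_const _

lemma lommelLead_pos {μ ν x : ℝ} (hν : 0 ≤ ν) (h : ν < μ + 1) (hx : 0 < x) :
    0 < lommelLead μ ν x := by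
  have h1 : 0 < Real.Gamma ((μ - ν + 1) / 2) := Real.Gamma_pos_of_pos (by linarith)
  have h2 : 0 < Real.Gamma ((μ + ν + 3) / 2) := Real.Gamma_pos_of_pos (by linarith)
  unfold lommelLead
  positivity

lemma hasDerivAt_lommelLead {μ ν x : ℝ} (hx : 0 < x) :
    HasDerivAt (lommelLead μ ν) (μ * lommelLead μ ν x / x) x := by
  have h := (((hasDerivAt_id x).div_const 2).rpow_const (p := μ)
      (Or.inl (by simp only [id]; positivity))).div_const
      (Real.Gamma ((μ - ν + 1) / 2) * Real.Gamma ((μ + ν + 3) / 2))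
  refine h.congr_deriv ?_
  unfold lommelLead
  simp only [id]
  rw [Real.rpow_sub_one (by positivity)]
  field_simp

/-- The recurrence `t̃'_{μ,ν} = t̃_{μ+1,ν+1} + (ν/x) t̃_{μ,ν} + a`. -/
lemma hasDerivAt_lommel_up {μ ν x : ℝ} (hμ : 0 < μ) (hν : 0 ≤ ν) (h : ν < μ + 1) (hx : 0 < x) :
    HasDerivAt (lommel μ ν)
      (lommel (μ + 1) (ν + 1) x + ν / x * lommel μ ν x + lommelLead μ ν x) x := by
  have hd := hasDerivAt_lommelSeries (m := μ + 1) (A := (μ - ν + 3) / 2) (B := (μ + ν + 3) / 2)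
    (by linarith) (by linarith) (by linarith) hx
  rw [lommelSeries_eq_add (by linarith) (by linarith) hx] at hd
  rw [lommel_eq, lommel_eq]
  refine hd.congr_deriv ?_
  unfold lommelLead
  ring_nf

lemma hasDerivAt_lommel_succ {μ ν x : ℝ} (hμ : 0 < μ) (hν : 0 ≤ ν) (h : ν < μ + 1) (hx : 0 < x) :
    HasDerivAt (lommel (μ + 1) (ν + 1))
      (lommel μ ν x - (ν + 1) / x * lommel (μ + 1) (ν + 1) x) x := by
  have hd := hasDerivAt_lommelSeries (m := μ + 2) (A := (μ + ν + 5) / 2) (B := (μ - ν + 3) / 2)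
    (by linarith) (by linarith) (by linarith) hx
  have e : lommel (μ + 1) (ν + 1) = lommelSeries (μ + 2) ((μ + ν + 5) / 2) ((μ - ν + 3) / 2) := by
    rw [lommel_eq]
    funext w
    rw [lommelSeries_comm]
    ring_nf
  rw [e, lommel_eq, lommelSeries_comm (μ + 1)]
  refine hd.congr_deriv ?_
  ring_nf

/-! ### Two differential inequalities -/

lemma lommel_succ_lt {μ ν : ℝ} (hμ : 0 < μ) (hν : 0 ≤ ν) (h : ν < μ + 1) :
    ∀ x > 0, 0 < lommel μ ν x - lommel (μ + 1) (ν + 1) x := by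
  refine pos_of_deriv_add_pos (fun R hR => (continuousOn_lommel hμ hν h hR).sub
    (continuousOn_lommel (by linarith) (by linarith) (by linarith) hR)) ?_
    (fun x hx => (hasDerivAt_lommel_up hμ hν h hx).sub (hasDerivAt_lommel_succ hμ hν h hx)) ?_
  · simp [lommel_zero hμ, lommel_zero (show 0 < μ + 1 by linarith)]
  · intro x hx
    have hy := lommel_pos hν h hx
    have hz := lommel_pos (μ := μ + 1) (ν := ν + 1) (by linarith) (by linarith) hx
    have ha := lommelLead_pos hν h hx
    have h1 : 0 ≤ ν / x * lommel μ ν x := by positivity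
    have h2 : 0 ≤ (ν + 1) / x * lommel (μ + 1) (ν + 1) x := by positivity
    linarith

/-- Equivalently, `(√x t̃)' > √x t̃`. -/
lemma lommel_growth {μ ν : ℝ} (hμ : 0 < μ) (hν : 1 ≤ ν) (h : ν < μ + 1) :
    ∀ x > 0, 0 < lommel (μ + 1) (ν + 1) x - lommel μ ν x + (ν + 1 / 2) * (lommel μ ν x / x) +
      lommelLead μ ν x := by
  have hν0 : 0 ≤ ν := by linarith
  refine pos_of_deriv_add_pos (fun R hR => ?_) ?_ (fun x hx =>
    (((hasDerivAt_lommel_succ hμ hν0 h hx).sub (hasDerivAt_lommel_up hμ hν0 h hx)).add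
      (((hasDerivAt_lommel_up hμ hν0 h hx).div (hasDerivAt_id x) hx.ne').const_mul
        (ν + 1 / 2))).add (hasDerivAt_lommelLead hx)) ?_
  · exact (((continuousOn_lommel (by linarith) (by linarith) (by linarith) hR).sub
      (continuousOn_lommel hμ hν0 h hR)).add
        ((continuousOn_lommel_div hμ hν0 h hR).const_smul (ν + 1 / 2))).add
        (continuous_lommelLead ν hμ.le).continuousOn
  · simp [lommel_zero hμ, lommel_zero (show 0 < μ + 1 by linarith), lommelLead,
      Real.zero_rpow hμ.ne']
  · intro x hx
    have hy := lommel_pos hν0 h hx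
    have hD := lommel_succ_lt hμ hν0 h x hx
    have ha := lommelLead_pos hν0 h hx
    simp only [id]
    generalize lommel (μ + 1) (ν + 1) x = z at *
    generalize lommel μ ν x = y at *
    generalize lommelLead μ ν x = a at *
    have e : 0 < 1 / 2 * (y - z) / x + (ν + 1 / 2) * (ν - 1) * y / x ^ 2 +
        (ν + 1 / 2 + μ) * a / x := by
      have h1 : 0 ≤ ν - 1 := by linarith
      positivity
    refine e.trans_eq ?_
    field_simp
    ring

/-! ### The integral inequality -/

/-- The substitution `u ↦ β u` turns `B` into the integral of the leading term. -/
lemma Bconst_eq {μ ν β x : ℝ} (hμ : 0 < μ) (hν : 0 < ν) (hβ : 0 < β) (hx : 0 < x) :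
    Bconst μ ν β x = ∫ u in (0:ℝ)..x, Real.exp (-β * u) * u ^ ν * lommelLead μ ν u := by
  have hsub : lowerGamma (μ + ν + 1) (β * x) =
      β ^ (μ + ν + 1) * ∫ u in (0:ℝ)..x, Real.exp (-β * u) * u ^ (μ + ν) := by
    have := intervalIntegral.mul_integral_comp_mul_left (a := 0) (b := x)
      (f := fun u : ℝ => Real.exp (-u) * u ^ (μ + ν + 1 - 1)) (c := β)
    rw [mul_zero] at this
    rw [lowerGamma, ← this, Real.rpow_add_one hβ.ne', mul_comm _ β, mul_assoc,
      ← intervalIntegral.integral_const_mul (β ^ (μ + ν))]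
    congr 1
    refine intervalIntegral.integral_congr fun u hu => ?_
    rw [uIcc_of_le hx.le] at hu
    simp only [add_sub_cancel_right]
    rw [Real.mul_rpow hβ.le hu.1, neg_mul]
    ring
  have e : β ^ (-μ - ν - 1) * β ^ (μ + ν + 1) = 1 := by
    rw [← Real.rpow_add hβ, show -μ - ν - 1 + (μ + ν + 1) = 0 by ring, Real.rpow_zero]
  rw [Bconst, hsub, ← mul_assoc, e, one_mul, ← intervalIntegral.integral_div]
  refine intervalIntegral.integral_congr fun u hu => ?_
  rw [uIcc_of_le hx.le] at hu
  simp only [lommelLead]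
  rw [Real.div_rpow hu.1 (by norm_num), Real.rpow_add_of_nonneg hu.1 hμ.le hν.le]
  field_simp

theorem stmt5 (μ ν β : ℝ) (hμ : μ > 1/2) (hν1 : 3/2 ≤ ν) (hν2 : ν < μ + 1)
    (hβ1 : 0 < β) (hβ2 : β < 1) :
    ∀ x : ℝ, 0 < x →
      ∫ u in (0:ℝ)..x, Real.exp (-β * u) * u ^ ν * lommel μ ν u >
        1 / (1 - β) *
          ((1 - 4 * ν ^ 2 / ((2 * ν - 1) * (1 - β) * x)) *
              (Real.exp (-β * x) * x ^ ν * lommel μ ν x) - Bconst μ ν β x) := by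
  intro x hx
  have hμ0 : 0 < μ := by linarith
  have hν0 : 0 < ν := by linarith
  have hb : 0 < 1 - β := by linarith
  have h2ν : 0 < 2 * ν - 1 := by linarith
  set C := 4 * ν ^ 2 / ((2 * ν - 1) * (1 - β)) with hC
  -- `C (1 - β) = 4ν² / (2ν - 1)` exceeds `2ν`
  have hCge : 2 * ν ≤ C * (1 - β) := by
    have : C * (1 - β) = 4 * ν ^ 2 / (2 * ν - 1) := by rw [hC]; field_simp
    rw [this, le_div_iff₀ h2ν]
    nlinarith
  have hC0 : 0 < C := by positivity
  set E : ℝ → ℝ := fun u => Real.exp (-β * u) * u ^ ν with hE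
  have hEc : Continuous E := by
    have : Continuous fun u : ℝ => u ^ ν := Real.continuous_rpow_const hν0.le
    fun_prop
  have hEpos : ∀ u > 0, 0 < E u := fun u hu => by simp only [hE]; positivity
  have hEd : ∀ u > 0, HasDerivAt E (E u * (ν / u - β)) u := by
    intro u hu
    have h1 : HasDerivAt (fun u : ℝ => Real.exp (-β * u)) (Real.exp (-β * u) * (-β * 1)) u :=
      ((hasDerivAt_id u).const_mul (-β)).exp
    have h2 := h1.mul (Real.hasDerivAt_rpow_const (p := ν) (Or.inl hu.ne'))
    refine h2.congr_deriv ?_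
    simp only [hE]
    rw [Real.rpow_sub_one hu.ne']
    field_simp
    ring
  have hyc := continuousOn_lommel hμ0 hν0.le hν2 hx
  have hqc := continuousOn_lommel_div hμ0 hν0.le hν2 hx
  have hzc := continuousOn_lommel (μ := μ + 1) (ν := ν + 1) (by linarith) (by linarith)
    (by linarith) hx
  have hac := (continuous_lommelLead ν hμ0.le).continuousOn (s := Icc 0 x)
  have hint : ∀ f : ℝ → ℝ, ContinuousOn f (Icc 0 x) →
      IntervalIntegrable (fun u => E u * f u) volume 0 x := fun f hf =>
    ContinuousOn.intervalIntegrable_of_Icc hx.le (hEc.continuousOn.mul hf)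
  have hd : ∀ u > 0, HasDerivAt (fun u => E u * (lommel μ ν u - C * (lommel μ ν u / u))) _ u :=
    fun u hu => (hEd u hu).mul ((hasDerivAt_lommel_up hμ0 hν0.le hν2 hu).sub
      (((hasDerivAt_lommel_up hμ0 hν0.le hν2 hu).div (hasDerivAt_id u) hu.ne').const_mul C))
  have hle := intervalIntegral.sub_le_integral_of_hasDeriv_right_of_le hx.le
    (hEc.continuousOn.mul (hyc.sub (hqc.const_smul C)))
    (fun u hu => (hd u hu.1).hasDerivWithinAt)
    (φ := fun u => (1 - β) * (E u * lommel μ ν u) + E u * lommelLead μ ν u -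
      E u * (lommel μ ν u - lommel (μ + 1) (ν + 1) u))
    (by
      refine ContinuousOn.integrableOn_Icc ?_
      have := hEc.continuousOn (s := Icc 0 x)
      fun_prop)
    (fun u hu => ?_)
  · have hstrict : 0 < ∫ u in (0:ℝ)..x, E u * (lommel μ ν u - lommel (μ + 1) (ν + 1) u) := by
      refine intervalIntegral.intervalIntegral_pos_of_pos_on (hint _ (hyc.sub hzc)) ?_ hx
      intro u hu
      exact mul_pos (hEpos u hu.1) (lommel_succ_lt hμ0 hν0.le hν2 u hu.1)
    have hDint : IntervalIntegrable
        (fun u => E u * (lommel μ ν u - lommel (μ + 1) (ν + 1) u)) volume 0 x :=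
      hint _ (hyc.sub hzc)
    rw [intervalIntegral.integral_sub (((hint _ hyc).const_mul _).add (hint _ hac)) hDint,
      intervalIntegral.integral_add ((hint _ hyc).const_mul _)
      (hint _ hac), intervalIntegral.integral_const_mul] at hle
    rw [Bconst_eq hμ0 hν0 hβ1 hx, gt_iff_lt, one_div, inv_mul_lt_iff₀ hb]
    have hE0 : E 0 = 0 := by simp [hE, Real.zero_rpow hν0.ne']
    have hfin : (1 - 4 * ν ^ 2 / ((2 * ν - 1) * (1 - β) * x)) *
        (Real.exp (-β * x) * x ^ ν * lommel μ ν x) =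
        E x * (lommel μ ν x - C * (lommel μ ν x / x)) := by
      simp only [hE, hC]
      field_simp
    rw [hfin]
    simp only [Pi.mul_apply, Pi.sub_apply, Pi.smul_apply, smul_eq_mul, hE0, zero_mul, sub_zero]
      at hle
    linarith
  · have hu0 := hu.1
    have hEu := hEpos u hu0
    have hy := lommel_pos hν0.le hν2 hu0
    have hG := lommel_growth hμ0 (by linarith) hν2 u hu0
    simp only [id]
    generalize lommel (μ + 1) (ν + 1) u = z at *
    generalize lommel μ ν u = y at *
    generalize lommelLead μ ν u = a at *
    generalize E u = e at *
    have hyu : 0 < y / u := by positivity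
    -- the slack is a sum of three nonnegative terms
    have key : 0 ≤ e * ((C * (1 - β) - 2 * ν) * (y / u) +
        C / u * (z - y + (ν + 1 / 2) * (y / u) + a) + C / u * ((ν - 3 / 2) * (y / u))) := by
      have h1 : 0 ≤ C * (1 - β) - 2 * ν := by linarith
      have h2 : 0 ≤ ν - 3 / 2 := by linarith
      positivity
    rw [← sub_nonneg]
    refine key.trans_eq ?_
    field_simp
    ring
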